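/- Let λ > 0, let k ≥ 1, and let ν = Σ_{i=1}^{k} a_i δ_{b_i} be a Borel probability measure on ℝ supported on k distinct nonzero points b_1, …, b_k, with a_i > 0 and Σ a_i = 1. Let π = e^{−λ} Σ_{m=0}^∞ (λ^m/m!) ν^{∗m} be the classical compound Poisson distribution with rate λ and jump distribution ν, where ν^{∗m} denotes the m-fold classical convolution power of ν (ν^{∗0} = δ_0). Let (μ_n)_{n≥1} be Borel probability measures on ℝ, each infinitely divisible with respect to classical convolution, with finite moments of order up to 2k+2, and suppose ∫ x^i dμ_n → ∫ x^i dπ as n → ∞ for every i = 1, …, 2k+2. Then μ_n converges weakly to π. -/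

import Mathlib

open MeasureTheory Filter Topology BoundedContinuousFunction

/-- Classical convolution of two Borel measures on ℝ: the pushforward of the
product measure under addition. -/
noncomputable def classicalConv (μ ν : Measure ℝ) : Measure ℝ :=
  (μ.prod ν).map (fun p => p.1 + p.2)

/-- The m-fold classical convolution power of a measure (0th power is δ₀). -/
noncomputable def convPow (ν : Measure ℝ) : ℕ → Measure ℝ
  | 0 => Measure.dirac 0
  | n + 1 => classicalConv (convPow ν n) ν

/-- A probability measure is classically infinitely divisible if for every m ≥ 1 it
is the m-fold classical convolution power of some probability measure. -/
def IsClassicallyInfDiv (μ : Measure ℝ) : Prop :=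
  ∀ m : ℕ, 1 ≤ m → ∃ ν : Measure ℝ, IsProbabilityMeasure ν ∧ μ = convPow ν m

/-- Weak convergence of a sequence of measures: convergence of integrals of all
bounded continuous functions. -/
def WeakConv (μs : ℕ → Measure ℝ) (μ : Measure ℝ) : Prop :=
  ∀ f : ℝ →ᵇ ℝ, Tendsto (fun n => ∫ x, f x ∂(μs n)) atTop (𝓝 (∫ x, f x ∂μ))

/-- The classical compound Poisson distribution with rate λ and jump distribution ν:
e^{-λ} ∑_{m=0}^∞ (λ^m/m!) ν^{∗m}. -/
noncomputable def compoundPoisson (lam : ℝ) (ν : Measure ℝ) : Measure ℝ :=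
  Measure.sum (fun m : ℕ =>
    ENNReal.ofReal (Real.exp (-lam) * lam ^ m / (Nat.factorial m)) • convPow ν m)

/-!
Write `μₙ` as the `m`-th convolution power of a probability measure `ρ`, where `m = m(n) → ∞`. The
exponential moment generating series `M` turns convolution into multiplication, so
`M(μₙ) = M(ρ) ^ m`, while `M(π)` solves the differential equation of `exp (lam (M(ν) - 1))`.
Comparing the two, the convergence of the moments of `μₙ` says that `m` times the moments of `ρ`
tend to `lam` times the moments of `ν`.

Interpolate `x ↦ exp (itx) - 1` by a polynomial, taking `0` and each of the `k` atoms of `ν` as a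
double node. The error is at most a multiple of the nodal polynomial squared, which is nonnegative,
of degree `2k + 2`, and vanishes on the atoms and at `0`. Hence moments of order `1, …, 2k + 2`
suffice for `m (φ_ρ(t) - 1) → lam (φ_ν(t) - 1)`. Therefore
`φ_μₙ(t) = (1 + (φ_ρ(t) - 1)) ^ m → exp (lam (φ_ν(t) - 1)) = φ_π(t)`, and Lévy's continuity theorem
applies.
-/

open Finset.HasAntidiagonal (antidiagonal mem_antidiagonal antidiagonal.fst_le antidiagonal.snd_le)
open PowerSeries (coeff constantCoeff)
open scoped ENNReal NNReal Nat PowerSeries Polynomial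

section Moments

variable {μ ν : Measure ℝ}

lemma memLp_id_natCast_iff_integrable_pow [IsFiniteMeasure μ] {n : ℕ} :
    MemLp id n μ ↔ Integrable (fun x : ℝ => x ^ n) μ := by
  rcases eq_or_ne n 0 with rfl | hn
  · simp [memLp_zero_iff_aestronglyMeasurable, aestronglyMeasurable_id]
  · rw [← integrable_norm_rpow_iff aestronglyMeasurable_id (by exact_mod_cast hn) (by simp),
      ← integrable_norm_iff (f := fun x : ℝ => x ^ n) (by fun_prop)]
    simp

lemma integrable_pow_of_memLp_id [IsFiniteMeasure μ] {i n : ℕ} (h : MemLp id n μ) (hi : i ≤ n) :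
    Integrable (fun x : ℝ => x ^ i) μ :=
  memLp_id_natCast_iff_integrable_pow.1 (h.mono_exponent (by exact_mod_cast hi))

lemma memLp_id_natCast_iff_lintegral_one_add_enorm_pow_lt_top [IsFiniteMeasure μ] {n : ℕ} :
    MemLp id n μ ↔ ∫⁻ x : ℝ, (1 + ‖x‖ₑ) ^ n ∂μ < ∞ := by
  rcases eq_or_ne n 0 with rfl | hn
  · simp [memLp_zero_iff_aestronglyMeasurable, aestronglyMeasurable_id]
  have hn0 : (n : ℝ≥0∞) ≠ 0 := by exact_mod_cast hn
  have memLp_iff_lintegral {f : ℝ → ℝ} (hf : Continuous f) :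
      MemLp f n μ ↔ ∫⁻ x, ‖f x‖ₑ ^ n ∂μ < ∞ := by
    simp [MemLp, hf.aestronglyMeasurable,
      eLpNorm_lt_top_iff_lintegral_rpow_enorm_lt_top hn0 (ENNReal.natCast_ne_top n)]
  have enorm_one_add_abs (x : ℝ) : ‖1 + |x|‖ₑ = 1 + ‖x‖ₑ := by
    rw [Real.enorm_of_nonneg (by positivity), ENNReal.ofReal_add zero_le_one (abs_nonneg x),
      ENNReal.ofReal_one, ← Real.enorm_eq_ofReal_abs]
  constructor
  · intro h
    have h_one_add : MemLp (fun x : ℝ => 1 + |x|) n μ := (memLp_const (1 : ℝ)).add h.norm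
    simpa only [enorm_one_add_abs] using (memLp_iff_lintegral (by fun_prop)).1 h_one_add
  · intro h
    refine (memLp_iff_lintegral continuous_id).2 (lt_of_le_of_lt (lintegral_mono fun x => ?_) h)
    exact pow_le_pow_left₀ zero_le le_add_self n

lemma memLp_id_conv [IsFiniteMeasure μ] [IsFiniteMeasure ν] {p : ℝ≥0∞}
    (hμ : MemLp id p μ) (hν : MemLp id p ν) : MemLp id p (μ ∗ ν) :=
  (memLp_map_measure_iff aestronglyMeasurable_id (by fun_prop)).2
    ((hμ.comp_fst ν).add (hν.comp_snd μ))

-- By Fubini, some translate `y ↦ x + y` of the identity lies in `Lᵖ(ν)`.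
lemma memLp_id_right_of_conv [NeZero μ] [SFinite μ] [IsFiniteMeasure ν] {n : ℕ}
    (h : MemLp id n (μ ∗ ν)) : MemLp id n ν := by
  rcases eq_or_ne n 0 with rfl | hn
  · simp [memLp_zero_iff_aestronglyMeasurable, aestronglyMeasurable_id]
  have h_int : Integrable (fun z : ℝ × ℝ => ‖z.1 + z.2‖ ^ n) (μ.prod ν) :=
    (h.integrable_norm_pow hn).comp_measurable measurable_add
  obtain ⟨x, hx⟩ := h_int.prod_right_ae.exists
  have h_translate : MemLp (fun y : ℝ => x + y) n ν := by
    rw [← integrable_norm_rpow_iff (by fun_prop) (by exact_mod_cast hn) (by simp)]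
    simpa using hx
  simpa [Pi.sub_def, Function.id_def] using h_translate.sub (memLp_const x)

lemma integrable_exp_ofReal_mul_I (μ : Measure ℝ) [IsFiniteMeasure μ] (t : ℝ) :
    Integrable (fun x : ℝ => Complex.exp (t * x * Complex.I)) μ :=
  .of_bound (by fun_prop) 1 (ae_of_all _ fun x => by
    rw [← Complex.ofReal_mul, Complex.norm_exp_ofReal_mul_I])

end Moments

section ConvolutionPowers

variable {ν : Measure ℝ} [IsProbabilityMeasure ν]

lemma convPow_succ (ν : Measure ℝ) (m : ℕ) : convPow ν (m + 1) = convPow ν m ∗ ν := rfl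

instance isProbabilityMeasure_convPow (m : ℕ) : IsProbabilityMeasure (convPow ν m) := by
  induction m with
  | zero => exact Measure.dirac.isProbabilityMeasure
  | succ m ih => rw [convPow_succ]; infer_instance

lemma charFun_convPow (m : ℕ) (t : ℝ) : charFun (convPow ν m) t = charFun ν t ^ m := by
  induction m with
  | zero => simp [convPow]
  | succ m ih => rw [convPow_succ, charFun_conv, ih, pow_succ]

lemma memLp_id_convPow {p : ℝ≥0∞} (hν : MemLp id p ν) (m : ℕ) : MemLp id p (convPow ν m) := by
  induction m with
  | zero => exact (memLp_const (0 : ℝ)).ae_eq (ae_eq_dirac id).symm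
  | succ m ih => exact memLp_id_conv ih hν

lemma exists_convPow_eq_memLp_id {n m : ℕ} (h : MemLp id n (convPow ν m)) :
    ∃ ρ, IsProbabilityMeasure ρ ∧ convPow ν m = convPow ρ m ∧ MemLp id n ρ := by
  cases m with
  | zero => exact ⟨convPow ν 0, inferInstance, rfl, h⟩
  | succ m => exact ⟨ν, inferInstance, rfl, memLp_id_right_of_conv h⟩

lemma lintegral_convPow_le_pow {g : ℝ → ℝ≥0∞} (hg : Measurable g) (hg_zero : g 0 ≤ 1)
    (hg_add : ∀ x y, g (x + y) ≤ g x * g y) (m : ℕ) :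
    ∫⁻ x, g x ∂(convPow ν m) ≤ (∫⁻ x, g x ∂ν) ^ m := by
  induction m with
  | zero => simpa [convPow, lintegral_dirac' 0 hg] using hg_zero
  | succ m ih =>
    calc ∫⁻ x, g x ∂(convPow ν (m + 1))
        = ∫⁻ x, ∫⁻ y, g (x + y) ∂ν ∂(convPow ν m) := Measure.lintegral_conv hg
      _ ≤ ∫⁻ x, ∫⁻ y, g x * g y ∂ν ∂(convPow ν m) :=
          lintegral_mono fun x => lintegral_mono fun y => hg_add x y
      _ = (∫⁻ x, g x ∂(convPow ν m)) * ∫⁻ y, g y ∂ν :=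
          lintegral_lintegral_mul hg.aemeasurable hg.aemeasurable
      _ ≤ (∫⁻ x, g x ∂ν) ^ (m + 1) := by rw [pow_succ]; gcongr

end ConvolutionPowers

section MomentSeries

variable {μ ν : Measure ℝ}

/-- The exponential moment generating series `∑ᵢ (∫ xⁱ / i! dμ) Xⁱ` of a measure, as a formal power
series. A coefficient is meaningful only if the moment of that order is finite. -/
noncomputable def momentSeries (μ : Measure ℝ) : ℝ⟦X⟧ :=
  PowerSeries.mk fun i => ∫ x, x ^ i / i ! ∂μ

lemma coeff_momentSeries (μ : Measure ℝ) (i : ℕ) :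
    coeff i (momentSeries μ) = (∫ x, x ^ i ∂μ) / i ! := by
  rw [momentSeries, PowerSeries.coeff_mk, integral_div]

lemma constantCoeff_momentSeries (μ : Measure ℝ) [IsProbabilityMeasure μ] :
    constantCoeff (momentSeries μ) = 1 := by
  simp [← PowerSeries.coeff_zero_eq_constantCoeff_apply, coeff_momentSeries]

lemma add_pow_div_factorial {K : Type*} [Field K] [CharZero K] (x y : K) (i : ℕ) :
    (x + y) ^ i / i ! = ∑ p ∈ antidiagonal i, x ^ p.1 / p.1 ! * (y ^ p.2 / p.2 !) := by
  rw [(Commute.all x y).add_pow', Finset.sum_div]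
  refine Finset.sum_congr rfl fun p hp => ?_
  obtain rfl := mem_antidiagonal.1 hp
  rw [nsmul_eq_mul, Nat.cast_add_choose]
  have := Nat.cast_ne_zero (R := K).2 (Nat.factorial_ne_zero (p.1 + p.2))
  field_simp

lemma coeff_momentSeries_conv [IsFiniteMeasure μ] [IsFiniteMeasure ν] {i : ℕ}
    (hμ : MemLp id i μ) (hν : MemLp id i ν) :
    coeff i (momentSeries (μ ∗ ν)) =
      coeff i (momentSeries μ * momentSeries ν) := by
  have integrable_term (p : ℕ × ℕ) (hp : p ∈ antidiagonal i) :
      Integrable (fun z : ℝ × ℝ => z.1 ^ p.1 / p.1 ! * (z.2 ^ p.2 / p.2 !)) (μ.prod ν) := by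
    exact ((integrable_pow_of_memLp_id hμ (antidiagonal.fst_le hp)).div_const _).mul_prod
      ((integrable_pow_of_memLp_id hν (antidiagonal.snd_le hp)).div_const _)
  simp only [PowerSeries.coeff_mul, momentSeries, PowerSeries.coeff_mk]
  rw [Measure.conv, integral_map (by fun_prop) (by fun_prop)]
  simp only [add_pow_div_factorial]
  rw [integral_finsetSum _ integrable_term]
  exact Finset.sum_congr rfl fun p _ =>
    integral_prod_mul (fun x : ℝ => x ^ p.1 / p.1 !) (fun y : ℝ => y ^ p.2 / p.2 !)

lemma coeff_momentSeries_convPow [IsProbabilityMeasure ν] {i : ℕ} (hν : MemLp id i ν) (m : ℕ) :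
    coeff i (momentSeries (convPow ν m)) =
      coeff i (momentSeries ν ^ m) := by
  induction m generalizing i with
  | zero =>
    rcases eq_or_ne i 0 with rfl | hi <;>
      simp [coeff_momentSeries, convPow, PowerSeries.coeff_one, *]
  | succ m ih =>
    rw [convPow_succ, coeff_momentSeries_conv (memLp_id_convPow hν m) hν, pow_succ,
      PowerSeries.coeff_mul, PowerSeries.coeff_mul]
    refine Finset.sum_congr rfl fun p hp => ?_
    rw [ih (hν.mono_exponent (by exact_mod_cast antidiagonal.fst_le hp))]

end MomentSeries

section CompoundPoisson

/-- The mass `e^{-lam} lam^m / m!` given to `m` by the Poisson distribution of rate `lam`, that is,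
the weight of `ν^{∗m}` in `compoundPoisson lam ν`. -/
noncomputable def poissonWeight (lam : ℝ) (m : ℕ) : ℝ :=
  Real.exp (-lam) * lam ^ m / m !

lemma compoundPoisson_eq_sum (lam : ℝ) (ν : Measure ℝ) :
    compoundPoisson lam ν =
      Measure.sum fun m => ENNReal.ofReal (poissonWeight lam m) • convPow ν m :=
  rfl

lemma succ_mul_poissonWeight_succ (lam : ℝ) (m : ℕ) :
    (m + 1) * poissonWeight lam (m + 1) = lam * poissonWeight lam m := by
  simp only [poissonWeight, Nat.factorial_succ, Nat.cast_mul, Nat.cast_succ, pow_succ]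
  field_simp

lemma poissonWeight_succ_smul_derivative_pow_succ (lam : ℝ) (A : ℝ⟦X⟧) (m : ℕ) :
    poissonWeight lam (m + 1) • d⁄dX ℝ (A ^ (m + 1)) =
      poissonWeight lam m • (d⁄dX ℝ (lam • (A - 1)) * A ^ m) := by
  have h_derivative : d⁄dX ℝ (A ^ (m + 1)) =
      ((m : ℝ) + 1) • (d⁄dX ℝ A * A ^ m) := by
    rw [PowerSeries.derivative_pow, ← Nat.cast_succ, Nat.cast_smul_eq_nsmul, nsmul_eq_mul,
      Nat.add_sub_cancel]
    ring
  rw [h_derivative, Derivation.map_smul, map_sub, Derivation.map_one_eq_zero, sub_zero,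
    smul_mul_assoc, smul_smul, smul_smul, mul_comm, succ_mul_poissonWeight_succ, mul_comm]

lemma hasSum_poissonWeight_mul_pow (lam : ℝ) (z : ℂ) :
    HasSum (fun m => (poissonWeight lam m : ℂ) * z ^ m) (Complex.exp (lam * (z - 1))) := by
  have h_exp : HasSum (fun m : ℕ => Complex.exp (-lam) * ((lam * z) ^ m / m !))
      (Complex.exp (-lam) * Complex.exp (lam * z)) := by
    rw [Complex.exp_eq_exp_ℂ]
    exact (NormedSpace.expSeries_div_hasSum_exp (𝔸 := ℂ) (lam * z)).mul_left _
  convert h_exp using 1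
  · ext m
    simp only [poissonWeight]
    push_cast
    ring
  · rw [← Complex.exp_add]
    ring_nf

lemma hasSum_poissonWeight (lam : ℝ) : HasSum (poissonWeight lam) 1 := by
  rw [← Complex.hasSum_ofReal]
  simpa using hasSum_poissonWeight_mul_pow lam 1

variable {lam : ℝ} {ν : Measure ℝ}

lemma poissonWeight_nonneg (hlam : 0 ≤ lam) (m : ℕ) : 0 ≤ poissonWeight lam m := by
  unfold poissonWeight
  positivity

lemma hasSum_integral_compoundPoisson (hlam : 0 ≤ lam) {E : Type*} [NormedAddCommGroup E]
    [NormedSpace ℝ E] {f : ℝ → E} (hf : Integrable f (compoundPoisson lam ν)) :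
    HasSum (fun m => poissonWeight lam m • ∫ x, f x ∂(convPow ν m))
      (∫ x, f x ∂(compoundPoisson lam ν)) := by
  rw [compoundPoisson_eq_sum] at hf ⊢
  simpa only [integral_smul_measure, ENNReal.toReal_ofReal (poissonWeight_nonneg hlam _)]
    using hasSum_integral_measure hf

variable [IsProbabilityMeasure ν]

lemma isProbabilityMeasure_compoundPoisson (hlam : 0 ≤ lam) :
    IsProbabilityMeasure (compoundPoisson lam ν) := by
  constructor
  calc compoundPoisson lam ν Set.univ
      = ∑' m, ENNReal.ofReal (poissonWeight lam m) := by simp [compoundPoisson_eq_sum]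
    _ = 1 := by
        rw [← ENNReal.ofReal_tsum_of_nonneg (poissonWeight_nonneg hlam)
          (hasSum_poissonWeight lam).summable, (hasSum_poissonWeight lam).tsum_eq,
          ENNReal.ofReal_one]

lemma charFun_compoundPoisson (hlam : 0 ≤ lam) (t : ℝ) :
    charFun (compoundPoisson lam ν) t = Complex.exp (lam * (charFun ν t - 1)) := by
  have := isProbabilityMeasure_compoundPoisson hlam (ν := ν)
  have h_sum := hasSum_integral_compoundPoisson hlam
    (integrable_exp_ofReal_mul_I (compoundPoisson lam ν) t)
  simp only [← charFun_apply_real, charFun_convPow, Complex.real_smul] at h_sum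
  exact h_sum.unique (hasSum_poissonWeight_mul_pow lam _)

lemma lintegral_compoundPoisson_lt_top (hlam : 0 ≤ lam) {g : ℝ → ℝ≥0∞} (hg : Measurable g)
    (hg_zero : g 0 ≤ 1) (hg_add : ∀ x y, g (x + y) ≤ g x * g y) (hgν : ∫⁻ x, g x ∂ν < ∞) :
    ∫⁻ x, g x ∂(compoundPoisson lam ν) < ∞ := by
  lift ∫⁻ x, g x ∂ν to ℝ≥0 using hgν.ne with c hc
  have h_summable : Summable fun m => poissonWeight lam m * (c : ℝ) ^ m := by
    rw [← Complex.summable_ofReal]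
    simpa using (hasSum_poissonWeight_mul_pow lam (c : ℝ)).summable
  calc ∫⁻ x, g x ∂(compoundPoisson lam ν)
      = ∑' m, ENNReal.ofReal (poissonWeight lam m) * ∫⁻ x, g x ∂(convPow ν m) := by
        simp [compoundPoisson_eq_sum, lintegral_sum_measure, lintegral_smul_measure]
    _ ≤ ∑' m, ENNReal.ofReal (poissonWeight lam m * (c : ℝ) ^ m) := by
        gcongr with m
        rw [ENNReal.ofReal_mul (poissonWeight_nonneg hlam m), ENNReal.ofReal_pow c.coe_nonneg,
          ENNReal.ofReal_coe_nnreal, hc]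
        gcongr
        exact lintegral_convPow_le_pow hg hg_zero hg_add m
    _ < ∞ := h_summable.tsum_ofReal_lt_top

-- The function `(1 + |x|) ^ n` is submultiplicative, unlike `|x| ^ n`.
lemma memLp_id_compoundPoisson (hlam : 0 ≤ lam) {n : ℕ} (hν : MemLp id n ν) :
    MemLp id n (compoundPoisson lam ν) := by
  have := isProbabilityMeasure_compoundPoisson hlam (ν := ν)
  rw [memLp_id_natCast_iff_lintegral_one_add_enorm_pow_lt_top] at hν ⊢
  refine lintegral_compoundPoisson_lt_top hlam (by fun_prop) (by simp) (fun x y => ?_) hν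
  rw [← mul_pow]
  gcongr
  calc 1 + ‖x + y‖ₑ ≤ 1 + ‖x‖ₑ + ‖y‖ₑ := by rw [add_assoc]; gcongr; exact enorm_add_le x y
    _ ≤ 1 + ‖x‖ₑ + ‖y‖ₑ + ‖x‖ₑ * ‖y‖ₑ := le_self_add
    _ = (1 + ‖x‖ₑ) * (1 + ‖y‖ₑ) := by ring

lemma hasSum_coeff_momentSeries_compoundPoisson (hlam : 0 ≤ lam) {i : ℕ} (hν : MemLp id i ν) :
    HasSum (fun m => poissonWeight lam m * coeff i (momentSeries ν ^ m))
      (coeff i (momentSeries (compoundPoisson lam ν))) := by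
  have := isProbabilityMeasure_compoundPoisson hlam (ν := ν)
  have h_int : Integrable (fun x : ℝ => x ^ i) (compoundPoisson lam ν) :=
    memLp_id_natCast_iff_integrable_pow.1 (memLp_id_compoundPoisson hlam hν)
  simpa only [← coeff_momentSeries_convPow hν, coeff_momentSeries, smul_eq_mul, mul_div_assoc]
    using (hasSum_integral_compoundPoisson hlam h_int).div_const (i ! : ℝ)

-- Formally `momentSeries π = exp (lam • (momentSeries ν - 1))`; this is its differential equation.
lemma coeff_derivative_momentSeries_compoundPoisson (hlam : 0 ≤ lam) {i : ℕ}
    (hν : MemLp id (i + 1 : ℕ) ν) :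
    coeff i (d⁄dX ℝ (momentSeries (compoundPoisson lam ν))) =
      coeff i (d⁄dX ℝ (lam • (momentSeries ν - 1)) *
        momentSeries (compoundPoisson lam ν)) := by
  have h_lhs : HasSum (fun m => poissonWeight lam (m + 1) *
      (coeff (i + 1) (momentSeries ν ^ (m + 1)) * (i + 1)))
      (coeff (i + 1) (momentSeries (compoundPoisson lam ν)) * (i + 1)) := by
    have h := (hasSum_nat_add_iff' 1).2
      ((hasSum_coeff_momentSeries_compoundPoisson hlam hν).mul_right ((i : ℝ) + 1))
    simpa [PowerSeries.coeff_one, mul_assoc] using h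
  have h_rhs := hasSum_sum (s := antidiagonal i) fun p hp =>
    (hasSum_coeff_momentSeries_compoundPoisson hlam (hν.mono_exponent
      (by exact_mod_cast (antidiagonal.snd_le hp).trans i.le_succ))).mul_left
      (coeff p.1 (d⁄dX ℝ (lam • (momentSeries ν - 1))))
  rw [← PowerSeries.coeff_mul] at h_rhs
  rw [PowerSeries.coeff_derivative]
  refine h_lhs.unique (h_rhs.congr_fun fun m => ?_)
  have h_term := congrArg (coeff i)
    (poissonWeight_succ_smul_derivative_pow_succ lam (momentSeries ν) m)
  rw [PowerSeries.coeff_smul, PowerSeries.coeff_smul, PowerSeries.coeff_mul,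
    PowerSeries.coeff_derivative, smul_eq_mul, smul_eq_mul, Finset.mul_sum] at h_term
  rw [h_term]
  exact Finset.sum_congr rfl fun p _ => mul_left_comm _ _ _

end CompoundPoisson

section CoefficientwiseConvergence

variable {α R : Type*} {l : Filter α} {N : ℕ}

/-- Convergence of the coefficients of order at most `N` of a family of formal power series along a
filter. -/
def TendstoCoeff [Semiring R] [TopologicalSpace R] (N : ℕ) (A : α → R⟦X⟧) (l : Filter α)
    (A₀ : R⟦X⟧) : Prop :=
  ∀ i ≤ N, Tendsto (fun n => coeff i (A n)) l (𝓝 (coeff i A₀))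

namespace TendstoCoeff

lemma mono [Semiring R] [TopologicalSpace R] {M : ℕ} {A : α → R⟦X⟧} {A₀ : R⟦X⟧}
    (hA : TendstoCoeff N A l A₀) (hMN : M ≤ N) : TendstoCoeff M A l A₀ :=
  fun i hi => hA i (hi.trans hMN)

lemma mul [Semiring R] [TopologicalSpace R] [IsTopologicalSemiring R] {A B : α → R⟦X⟧}
    {A₀ B₀ : R⟦X⟧} (hA : TendstoCoeff N A l A₀) (hB : TendstoCoeff N B l B₀) :
    TendstoCoeff N (fun n => A n * B n) l (A₀ * B₀) := by
  intro i hi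
  simp only [PowerSeries.coeff_mul]
  exact tendsto_finsetSum _ fun p hp =>
    (hA _ ((antidiagonal.fst_le hp).trans hi)).mul (hB _ ((antidiagonal.snd_le hp).trans hi))

lemma derivative [CommSemiring R] [TopologicalSpace R] [ContinuousMul R] {A : α → R⟦X⟧}
    {A₀ : R⟦X⟧} (hA : TendstoCoeff (N + 1) A l A₀) :
    TendstoCoeff N (fun n => d⁄dX R (A n)) l (d⁄dX R A₀) := by
  intro i hi
  simp only [PowerSeries.coeff_derivative]
  exact (hA (i + 1) (by lia)).mul_const _

lemma of_derivative [Field R] [CharZero R] [TopologicalSpace R] [ContinuousMul R] {A : α → R⟦X⟧}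
    {A₀ : R⟦X⟧} (h_const : Tendsto (fun n => constantCoeff (A n)) l (𝓝 (constantCoeff A₀)))
    (h_deriv : TendstoCoeff N (fun n => d⁄dX R (A n)) l (d⁄dX R A₀)) :
    TendstoCoeff (N + 1) A l A₀ := by
  rintro (_ | i) hi
  · simpa only [PowerSeries.coeff_zero_eq_constantCoeff_apply] using h_const
  · have h_ne : (i : R) + 1 ≠ 0 := by exact_mod_cast i.succ_ne_zero
    simpa only [PowerSeries.coeff_derivative, mul_inv_cancel_right₀ h_ne]
      using (h_deriv i (by lia)).mul_const ((i : R) + 1)⁻¹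

lemma of_mul [Ring R] [TopologicalSpace R] [IsTopologicalRing R] {A B : α → R⟦X⟧}
    {A₀ B₀ : R⟦X⟧} (hAB : TendstoCoeff N (fun n => A n * B n) l (A₀ * B₀))
    (hB : TendstoCoeff N B l B₀) (hB_const : ∀ n, constantCoeff (B n) = 1)
    (hB₀_const : constantCoeff B₀ = 1) : TendstoCoeff N A l A₀ := by
  have coeff_eq {C D : R⟦X⟧} (hD : constantCoeff D = 1) (i : ℕ) :
      coeff i C = coeff i (C * D) - ∑ j ∈ Finset.range i, coeff j C * coeff (i - j) D := by
    rw [PowerSeries.coeff_mul, Finset.Nat.sum_antidiagonal_eq_sum_range_succ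
      (fun a b => coeff a C * coeff b D), Finset.sum_range_succ]
    simp [hD]
  intro i hi
  induction i using Nat.strong_induction_on with
  | _ i ih =>
    rw [coeff_eq hB₀_const]
    simp only [fun n => coeff_eq (C := A n) (hB_const n) i]
    refine (hAB i hi).sub (tendsto_finsetSum _ fun j hj => ?_)
    have hj_lt : j < i := Finset.mem_range.1 hj
    exact (ih j hj_lt (by lia)).mul (hB (i - j) (by lia))

end TendstoCoeff

lemma derivative_pow_mul_self [CommRing R] (F : R⟦X⟧) (m : ℕ) :
    d⁄dX R (F ^ m) * F = d⁄dX R (m • (F - 1)) * F ^ m := by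
  rw [PowerSeries.derivative_pow, map_nsmul, map_sub, Derivation.map_one_eq_zero, sub_zero]
  cases m with
  | zero => simp
  | succ m => simp only [Nat.add_sub_cancel, nsmul_eq_mul]; ring

variable {𝕜 : Type*} [RCLike 𝕜] {m : α → ℕ} {F : α → 𝕜⟦X⟧}

lemma tendstoCoeff_one_of_nsmul_sub_one (hm : Tendsto m l atTop) {W : 𝕜⟦X⟧}
    (h : TendstoCoeff N (fun n => m n • (F n - 1)) l W) : TendstoCoeff N F l 1 := by
  intro i hi
  have h_lim : Tendsto (fun n => coeff i (1 : 𝕜⟦X⟧) + (m n : 𝕜)⁻¹ * coeff i (m n • (F n - 1))) l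
      (𝓝 (coeff i 1 + 0 * coeff i W)) :=
    ((tendsto_inv_atTop_nhds_zero_nat.comp hm).mul (h i hi)).const_add _
  rw [zero_mul, add_zero] at h_lim
  refine h_lim.congr' ?_
  filter_upwards [hm.eventually_ne_atTop 0] with n hn
  rw [map_nsmul, nsmul_eq_mul, inv_mul_cancel_left₀ (Nat.cast_ne_zero.2 hn), map_sub,
    add_sub_cancel]

-- `Q` plays the role of `exp W`, so this inverts `(1 + W / m) ^ m → exp W` coefficient by
-- coefficient: the cumulants of `F ^ m` are, in the limit, the coefficients of `m • (F - 1)`.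
lemma tendstoCoeff_nsmul_sub_one (hm : Tendsto m l atTop) {Q W : 𝕜⟦X⟧}
    (hF : ∀ n, constantCoeff (F n) = 1) (hQ : constantCoeff Q = 1) (hW : constantCoeff W = 0)
    (hQW : ∀ i < N, coeff i (d⁄dX 𝕜 Q) = coeff i (d⁄dX 𝕜 W * Q))
    (h : TendstoCoeff N (fun n => F n ^ m n) l Q) :
    TendstoCoeff N (fun n => m n • (F n - 1)) l W := by
  have h_const : Tendsto (fun n => constantCoeff (m n • (F n - 1))) l (𝓝 (constantCoeff W)) := by
    simpa [hF, hW] using tendsto_const_nhds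
  induction N with
  | zero => simpa [TendstoCoeff] using h_const
  | succ N ih =>
    have h_pow : TendstoCoeff N (fun n => F n ^ m n) l Q := h.mono N.le_succ
    have hF_one : TendstoCoeff N F l 1 :=
      tendstoCoeff_one_of_nsmul_sub_one hm (ih (fun i hi => hQW i (by lia)) h_pow)
    have h_mul : TendstoCoeff N (fun n => d⁄dX 𝕜 (m n • (F n - 1)) * F n ^ m n) l
        (d⁄dX 𝕜 W * Q) := by
      intro i hi
      rw [← hQW i (by lia), ← mul_one (d⁄dX 𝕜 Q)]
      simpa only [derivative_pow_mul_self] using h.derivative.mul hF_one i hi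
    exact .of_derivative h_const (h_mul.of_mul h_pow (by simp [hF]) hQ)

end CoefficientwiseConvergence

section Interpolation

variable {f : ℂ → ℂ}

lemma differentiable_dslope (hf : Differentiable ℂ f) (c : ℂ) : Differentiable ℂ (dslope f c) := by
  rw [← differentiableOn_univ] at hf ⊢
  exact (Complex.differentiableOn_dslope univ_mem).2 hf

lemma exists_norm_dslope_le (hf : Differentiable ℂ f) (hf_bdd : ∃ C, ∀ x : ℝ, ‖f x‖ ≤ C) (c : ℝ) :
    ∃ C, ∀ x : ℝ, ‖dslope f c x‖ ≤ C := by
  obtain ⟨C, hC⟩ := hf_bdd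
  have h_cont : Continuous fun x : ℝ => dslope f c x :=
    (differentiable_dslope hf c).continuous.comp Complex.continuous_ofReal
  obtain ⟨D, hD⟩ := (isCompact_closedBall c 1).exists_bound_of_continuousOn h_cont.continuousOn
  refine ⟨max D (C + C), fun x => ?_⟩
  by_cases hx : x ∈ Metric.closedBall c 1
  · exact (hD x hx).trans (le_max_left _ _)
  have h_dist : 1 < ‖(x : ℂ) - c‖ := by
    rw [← Complex.ofReal_sub, Complex.norm_real, ← dist_eq_norm]
    simpa using hx
  have h_ne : (x : ℂ) ≠ c := sub_ne_zero.1 (norm_pos_iff.1 (one_pos.trans h_dist))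
  calc ‖dslope f c x‖ = ‖f x - f c‖ / ‖(x : ℂ) - c‖ := by
        rw [dslope_of_ne _ h_ne, slope_def_field, norm_div]
    _ ≤ ‖f x - f c‖ := div_le_self (norm_nonneg _) h_dist.le
    _ ≤ C + C := norm_sub_le_of_le (hC x) (hC c)
    _ ≤ max D (C + C) := le_max_right _ _

lemma exists_polynomial_norm_sub_le (hf : Differentiable ℂ f) (hf_bdd : ∃ C, ∀ x : ℝ, ‖f x‖ ≤ C)
    (t : Multiset ℝ) :
    ∃ Q : ℂ[X], Q.natDegree ≤ t.card ∧
      ∃ C, ∀ x : ℝ, ‖f x - Q.eval (x : ℂ)‖ ≤ C * |(t.map (x - ·)).prod| := by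
  induction t using Multiset.induction generalizing f with
  | empty => exact ⟨0, by simp, by simpa using hf_bdd⟩
  | cons c t ih =>
    obtain ⟨Q, hQ, C, hC⟩ := ih (differentiable_dslope hf c) (exists_norm_dslope_le hf hf_bdd c)
    refine ⟨.C (f c) + (.X - .C (c : ℂ)) * Q, ?_, C, fun x => ?_⟩
    · rw [Polynomial.natDegree_C_add, Multiset.card_cons, add_comm]
      exact Polynomial.natDegree_mul_le_of_le (Polynomial.natDegree_X_sub_C_le _) hQ
    · have h_newton : f x - (Polynomial.C (f c) + (.X - .C (c : ℂ)) * Q).eval (x : ℂ) =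
          ((x - c : ℝ) : ℂ) * (dslope f c x - Q.eval (x : ℂ)) := by
        have := sub_smul_dslope f (c : ℂ) x
        simp only [smul_eq_mul, Polynomial.eval_add, Polynomial.eval_C, Polynomial.eval_mul,
          Polynomial.eval_sub, Polynomial.eval_X, Complex.ofReal_sub] at this ⊢
        linear_combination -this
      rw [h_newton, norm_mul, Complex.norm_real, Multiset.map_cons, Multiset.prod_cons, abs_mul,
        mul_left_comm, Real.norm_eq_abs]
      gcongr
      exact hC x

lemma exists_polynomial_norm_sub_le_nodal_sq (hf : Differentiable ℂ f)
    (hf_bdd : ∃ C, ∀ x : ℝ, ‖f x‖ ≤ C) (s : Finset ℝ) :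
    ∃ Q : ℂ[X], Q.natDegree ≤ 2 * s.card ∧
      ∃ C, ∀ x : ℝ, ‖f x - Q.eval (x : ℂ)‖ ≤ C * (Lagrange.nodal s id ^ 2).eval x := by
  obtain ⟨Q, hQ, C, hC⟩ := exists_polynomial_norm_sub_le hf hf_bdd (2 • s.val)
  refine ⟨Q, by simpa using hQ, C, fun x => ?_⟩
  have h_prod : ((2 • s.val).map (x - ·)).prod = (Lagrange.nodal s id ^ 2).eval x := by
    rw [Multiset.map_nsmul, Multiset.prod_nsmul, Polynomial.eval_pow, Lagrange.eval_nodal]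
    rfl
  simpa only [h_prod, Polynomial.eval_pow, abs_sq] using hC x

end Interpolation

section PolynomialIntegrals

lemma eval_algebraMap_eq_sum_smul {R A : Type*} [CommSemiring R] [Semiring A] [Algebra R A]
    {P : A[X]} {N : ℕ} (hP : P.natDegree ≤ N) (x : R) :
    P.eval (algebraMap R A x) = ∑ i ∈ Finset.range (N + 1), x ^ i • P.coeff i := by
  rw [Polynomial.eval_eq_sum_range' (Nat.lt_succ_of_le hP)]
  exact Finset.sum_congr rfl fun i _ => by rw [← map_pow, ← Algebra.commutes, Algebra.smul_def]

variable {A : Type*} [NormedRing A] [NormedAlgebra ℝ A] {P : A[X]} {N : ℕ}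

lemma integrable_eval_algebraMap {σ : Measure ℝ} [IsFiniteMeasure σ] (hP : P.natDegree ≤ N)
    (hσ : MemLp id N σ) : Integrable (fun x => P.eval (algebraMap ℝ A x)) σ := by
  simp only [eval_algebraMap_eq_sum_smul hP]
  exact integrable_finsetSum _ fun i hi =>
    (integrable_pow_of_memLp_id hσ (Finset.mem_range_succ_iff.1 hi)).smul_const _

variable [CompleteSpace A]

lemma integral_eval_algebraMap {σ : Measure ℝ} [IsFiniteMeasure σ] (hP : P.natDegree ≤ N)
    (hσ : MemLp id N σ) :
    ∫ x, P.eval (algebraMap ℝ A x) ∂σ =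
      ∑ i ∈ Finset.range (N + 1), (∫ x, x ^ i ∂σ) • P.coeff i := by
  simp only [eval_algebraMap_eq_sum_smul hP]
  rw [integral_finsetSum _ fun i hi =>
    (integrable_pow_of_memLp_id hσ (Finset.mem_range_succ_iff.1 hi)).smul_const _]
  simp only [integral_smul_const]

lemma tendsto_integral_eval_algebraMap {α : Type*} {l : Filter α}
    {σs : α → Measure ℝ} [∀ n, IsFiniteMeasure (σs n)] {σ : Measure ℝ} [IsFiniteMeasure σ]
    (hσs : ∀ n, MemLp id N (σs n)) (hσ : MemLp id N σ)
    (h_moment : ∀ i, 1 ≤ i → i ≤ N →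
      Tendsto (fun n => ∫ x, x ^ i ∂(σs n)) l (𝓝 (∫ x, x ^ i ∂σ)))
    (hP : P.natDegree ≤ N) (hP_zero : P.coeff 0 = 0) :
    Tendsto (fun n => ∫ x, P.eval (algebraMap ℝ A x) ∂(σs n)) l
      (𝓝 (∫ x, P.eval (algebraMap ℝ A x) ∂σ)) := by
  simp only [integral_eval_algebraMap hP (hσs _), integral_eval_algebraMap hP hσ]
  refine tendsto_finsetSum _ fun i hi => ?_
  rcases eq_or_ne i 0 with rfl | hi_ne
  · simpa [hP_zero] using tendsto_const_nhds
  · exact (h_moment i (by lia) (Finset.mem_range_succ_iff.1 hi)).smul_const _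

end PolynomialIntegrals

section AtomicLimit

lemma memLp_id_of_ae_mem_finset {σ : Measure ℝ} [IsFiniteMeasure σ] {s : Finset ℝ}
    (h : ∀ᵐ x ∂σ, x ∈ s) (p : ℝ≥0∞) : MemLp id p σ := by
  obtain ⟨C, hC⟩ := s.finite_toSet.isBounded.exists_norm_le
  exact .of_bound aestronglyMeasurable_id C (h.mono hC)

lemma tendsto_integral_of_norm_sub_le {X E α : Type*} [MeasurableSpace X] [NormedAddCommGroup E]
    [NormedSpace ℝ E] {l : Filter α} {σs : α → Measure X} {f q : X → E} {p : X → ℝ} {L : E}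
    (hf : ∀ n, AEStronglyMeasurable f (σs n)) (hp : ∀ n, Integrable p (σs n))
    (hq : ∀ n, Integrable q (σs n)) (h_le : ∀ x, ‖f x - q x‖ ≤ p x)
    (hp_lim : Tendsto (fun n => ∫ x, p x ∂(σs n)) l (𝓝 0))
    (hq_lim : Tendsto (fun n => ∫ x, q x ∂(σs n)) l (𝓝 L)) :
    Tendsto (fun n => ∫ x, f x ∂(σs n)) l (𝓝 L) := by
  have h_error : Tendsto (fun n => ∫ x, (f x - q x) ∂(σs n)) l (𝓝 0) :=
    squeeze_zero_norm (fun n => norm_integral_le_of_norm_le (hp n) (ae_of_all _ h_le)) hp_lim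
  have h_split (n : α) : ∫ x, (f x - q x) ∂(σs n) + ∫ x, q x ∂(σs n) = ∫ x, f x ∂(σs n) := by
    have h_int : Integrable (fun x => f x - q x) (σs n) :=
      (hp n).mono' ((hf n).sub (hq n).aestronglyMeasurable) (ae_of_all _ h_le)
    rw [← integral_add h_int (hq n)]
    simp only [sub_add_cancel]
  simpa only [h_split, zero_add] using h_error.add hq_lim

lemma tendsto_integral_of_tendsto_moments {α : Type*} {l : Filter α} {σs : α → Measure ℝ}
    [∀ n, IsFiniteMeasure (σs n)] {σ : Measure ℝ} [IsFiniteMeasure σ] {s : Finset ℝ} (hs : 0 ∈ s)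
    (hσ : ∀ᵐ x ∂σ, x ∈ s) (hσs : ∀ n, MemLp id (2 * s.card : ℕ) (σs n))
    (h_moment : ∀ i, 1 ≤ i → i ≤ 2 * s.card →
      Tendsto (fun n => ∫ x, x ^ i ∂(σs n)) l (𝓝 (∫ x, x ^ i ∂σ)))
    {f : ℂ → ℂ} (hf : Differentiable ℂ f) (hf_bdd : ∃ C, ∀ x : ℝ, ‖f x‖ ≤ C) (hf_zero : f 0 = 0) :
    Tendsto (fun n => ∫ x : ℝ, f x ∂(σs n)) l (𝓝 (∫ x : ℝ, f x ∂σ)) := by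
  obtain ⟨Q, hQ, C, hC⟩ := exists_polynomial_norm_sub_le_nodal_sq hf hf_bdd s
  set P : ℝ[X] := Lagrange.nodal s id ^ 2 with hP_def
  have hP : P.natDegree ≤ 2 * s.card := by
    simp [hP_def, Lagrange.natDegree_nodal]
  have hP_node {x : ℝ} (hx : x ∈ s) : P.eval x = 0 := by
    have : (Lagrange.nodal s id).eval x = 0 := Lagrange.eval_nodal_at_node (v := id) hx
    simp [hP_def, this]
  have hQ_node {x : ℝ} (hx : x ∈ s) : f x = Q.eval (x : ℂ) := by
    simpa [hP_node hx, sub_eq_zero] using hC x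
  have hσ_memLp : MemLp id (2 * s.card : ℕ) σ := memLp_id_of_ae_mem_finset hσ _
  have hP_lim : Tendsto (fun n => ∫ x, P.eval x ∂(σs n)) l (𝓝 0) := by
    rw [← integral_eq_zero_of_ae (hσ.mono fun x hx => hP_node hx)]
    exact tendsto_integral_eval_algebraMap hσs hσ_memLp h_moment hP
      (by rw [Polynomial.coeff_zero_eq_eval_zero, hP_node hs])
  have hQ_lim : Tendsto (fun n => ∫ x : ℝ, Q.eval (x : ℂ) ∂(σs n)) l (𝓝 (∫ x : ℝ, f x ∂σ)) := by
    rw [integral_congr_ae (hσ.mono fun x hx => hQ_node hx)]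
    exact tendsto_integral_eval_algebraMap hσs hσ_memLp h_moment hQ
      (by simpa [Polynomial.coeff_zero_eq_eval_zero, hf_zero] using (hQ_node hs).symm)
  exact tendsto_integral_of_norm_sub_le (p := fun x => C * P.eval x)
    (fun _ => (hf.continuous.comp Complex.continuous_ofReal).aestronglyMeasurable)
    (fun n => (integrable_eval_algebraMap hP (hσs n)).const_mul C)
    (fun n => integrable_eval_algebraMap hQ (hσs n)) hC
    (by simpa only [integral_const_mul, mul_zero] using hP_lim.const_mul C) hQ_lim

end AtomicLimit

section LimitTheorem

variable {α : Type*} {l : Filter α} {m : α → ℕ}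

lemma tendsto_one_add_pow_exp {g : α → ℂ} {t : ℂ} (hm : Tendsto m l atTop)
    (hg : Tendsto (fun n => m n * g n) l (𝓝 t)) :
    Tendsto (fun n => (1 + g n) ^ m n) l (𝓝 (Complex.exp t)) := by
  have hg_zero : Tendsto g l (𝓝 0) := by
    refine (zero_mul t ▸ (tendsto_inv_atTop_nhds_zero_nat.comp hm).mul hg).congr' ?_
    filter_upwards [hm.eventually_ne_atTop 0] with n hn
    exact inv_mul_cancel_left₀ (Nat.cast_ne_zero.2 hn) _
  have h_deriv : HasDerivAt (fun z : ℂ => Complex.log (1 + z)) 1 0 := by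
    simpa using ((hasDerivAt_id (0 : ℂ)).const_add 1).clog (by simp)
  have h_slope : Tendsto (fun n => dslope (fun z : ℂ => Complex.log (1 + z)) 0 (g n)) l (𝓝 1) := by
    have h := (continuousAt_dslope_same.2 h_deriv.differentiableAt).tendsto.comp hg_zero
    rwa [dslope_same, h_deriv.deriv] at h
  have h_log : Tendsto (fun n => m n * Complex.log (1 + g n)) l (𝓝 t) := by
    refine (mul_one t ▸ hg.mul h_slope).congr fun n => ?_
    have := sub_smul_dslope (fun z : ℂ => Complex.log (1 + z)) 0 (g n)
    simp only [sub_zero, add_zero, Complex.log_one, smul_eq_mul] at this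
    rw [mul_assoc, this]
  refine ((Complex.continuous_exp.tendsto t).comp h_log).congr' ?_
  have h_ne : ∀ᶠ n in l, 1 + g n ≠ 0 := (hg_zero.const_add 1).eventually_ne (by simp)
  filter_upwards [h_ne] with n hn
  rw [Function.comp_apply, Complex.exp_nat_mul, Complex.exp_log hn]

variable {ρs : α → Measure ℝ} [∀ n, IsProbabilityMeasure (ρs n)] {ν : Measure ℝ}
  [IsProbabilityMeasure ν] {lam : ℝ}

lemma tendsto_mul_moment_of_convPow (hlam : 0 ≤ lam) {N : ℕ} (hm : Tendsto m l atTop)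
    (hρs : ∀ n, MemLp id N (ρs n)) (hν : MemLp id N ν)
    (h_moment : ∀ i, 1 ≤ i → i ≤ N → Tendsto (fun n => ∫ x, x ^ i ∂(convPow (ρs n) (m n))) l
      (𝓝 (∫ x, x ^ i ∂(compoundPoisson lam ν))))
    {i : ℕ} (hi : 1 ≤ i) (hiN : i ≤ N) :
    Tendsto (fun n => m n * ∫ x, x ^ i ∂(ρs n)) l (𝓝 (lam * ∫ x, x ^ i ∂ν)) := by
  have := isProbabilityMeasure_compoundPoisson hlam (ν := ν)
  have h_pow : TendstoCoeff N (fun n => momentSeries (ρs n) ^ m n) l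
      (momentSeries (compoundPoisson lam ν)) := by
    intro j hj
    simp only [← coeff_momentSeries_convPow ((hρs _).mono_exponent (by exact_mod_cast hj)),
      coeff_momentSeries]
    rcases eq_or_ne j 0 with rfl | hj_ne
    · simpa using tendsto_const_nhds
    · exact (h_moment j (by lia) hj).div_const _
  have h_coeff : TendstoCoeff N (fun n => m n • (momentSeries (ρs n) - 1)) l
      (lam • (momentSeries ν - 1)) :=
    tendstoCoeff_nsmul_sub_one hm (fun n => constantCoeff_momentSeries (ρs n))
      (constantCoeff_momentSeries _) (by simp [constantCoeff_momentSeries])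
      (fun j hj => coeff_derivative_momentSeries_compoundPoisson hlam
        (hν.mono_exponent (by exact_mod_cast hj))) h_pow
  have coeff_sub_one (μ : Measure ℝ) :
      coeff i (momentSeries μ - 1) * i ! = ∫ x, x ^ i ∂μ := by
    rw [map_sub, PowerSeries.coeff_one, if_neg (by lia), sub_zero, coeff_momentSeries,
      div_mul_cancel₀ _ (by positivity)]
  simpa only [← Nat.cast_smul_eq_nsmul ℝ, PowerSeries.coeff_smul, smul_eq_mul, mul_assoc,
    coeff_sub_one] using (h_coeff i hiN).mul_const (i ! : ℝ)

lemma norm_exp_ofReal_mul_I_sub_one_le_two (t x : ℝ) :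
    ‖Complex.exp (t * x * Complex.I) - 1‖ ≤ 2 := by
  rw [← Complex.ofReal_mul, ← one_add_one_eq_two]
  exact norm_sub_le_of_le (Complex.norm_exp_ofReal_mul_I _).le norm_one.le

lemma integral_exp_ofReal_mul_I_sub_one_smul_measure (c : ℝ≥0) (μ : Measure ℝ)
    [IsProbabilityMeasure μ] (t : ℝ) :
    ∫ x : ℝ, (Complex.exp (t * x * Complex.I) - 1) ∂(c • μ) = (c : ℝ) * (charFun μ t - 1) := by
  rw [integral_smul_nnreal_measure, integral_sub (integrable_exp_ofReal_mul_I μ t)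
    (integrable_const 1), ← charFun_apply_real]
  simp [NNReal.smul_def]

variable {s : Finset ℝ}

lemma tendsto_mul_charFun_sub_one (hlam : 0 ≤ lam) (hs : 0 ∈ s) (hν : ∀ᵐ x ∂ν, x ∈ s)
    (hρs : ∀ n, MemLp id (2 * s.card : ℕ) (ρs n))
    (h_moment : ∀ i, 1 ≤ i → i ≤ 2 * s.card →
      Tendsto (fun n => m n * ∫ x, x ^ i ∂(ρs n)) l (𝓝 (lam * ∫ x, x ^ i ∂ν))) (t : ℝ) :
    Tendsto (fun n => m n * (charFun (ρs n) t - 1)) l (𝓝 (lam * (charFun ν t - 1))) := by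
  have h_moment_smul (i : ℕ) (hi : 1 ≤ i) (hi_le : i ≤ 2 * s.card) :
      Tendsto (fun n => ∫ x, x ^ i ∂((m n : ℝ≥0) • ρs n)) l
        (𝓝 (∫ x, x ^ i ∂(lam.toNNReal • ν))) := by
    simpa [integral_smul_nnreal_measure, NNReal.smul_def, hlam] using h_moment i hi hi_le
  have h_lim := tendsto_integral_of_tendsto_moments (σs := fun n => (m n : ℝ≥0) • ρs n)
    (σ := lam.toNNReal • ν) hs (Measure.ae_smul_measure hν _)
    (fun n => (hρs n).smul_measure ENNReal.coe_ne_top) h_moment_smul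
    (f := fun z => Complex.exp (t * z * Complex.I) - 1) (by fun_prop)
    ⟨2, norm_exp_ofReal_mul_I_sub_one_le_two t⟩ (by simp)
  simpa only [integral_exp_ofReal_mul_I_sub_one_smul_measure, NNReal.coe_natCast,
    Complex.ofReal_natCast, Real.coe_toNNReal _ hlam] using h_lim

lemma tendsto_charFun_convPow (hlam : 0 ≤ lam) (hs : 0 ∈ s) (hν : ∀ᵐ x ∂ν, x ∈ s)
    (hm : Tendsto m l atTop) (hρs : ∀ n, MemLp id (2 * s.card : ℕ) (ρs n))
    (h_moment : ∀ i, 1 ≤ i → i ≤ 2 * s.card →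
      Tendsto (fun n => ∫ x, x ^ i ∂(convPow (ρs n) (m n))) l
        (𝓝 (∫ x, x ^ i ∂(compoundPoisson lam ν)))) (t : ℝ) :
    Tendsto (fun n => charFun (convPow (ρs n) (m n)) t) l
      (𝓝 (charFun (compoundPoisson lam ν) t)) := by
  have h_exponent : Tendsto (fun n => m n * (charFun (ρs n) t - 1)) l
      (𝓝 (lam * (charFun ν t - 1))) :=
    tendsto_mul_charFun_sub_one hlam hs hν hρs (fun _ => tendsto_mul_moment_of_convPow hlam hm hρs
      (memLp_id_of_ae_mem_finset hν _) h_moment) t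
  simpa only [charFun_convPow, charFun_compoundPoisson hlam, add_sub_cancel]
    using tendsto_one_add_pow_exp hm h_exponent

end LimitTheorem

lemma weakConv_of_tendsto_charFun {μs : ℕ → Measure ℝ} {μ : Measure ℝ}
    (hμs : ∀ n, IsProbabilityMeasure (μs n)) (hμ : IsProbabilityMeasure μ)
    (h : ∀ t, Tendsto (fun n => charFun (μs n) t) atTop (𝓝 (charFun μ t))) : WeakConv μs μ := by
  let P : ℕ → ProbabilityMeasure ℝ := fun n => ⟨μs n, hμs n⟩
  let P₀ : ProbabilityMeasure ℝ := ⟨μ, hμ⟩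
  have h_lim : Tendsto P atTop (𝓝 P₀) := ProbabilityMeasure.tendsto_of_tendsto_charFun h
  exact ProbabilityMeasure.tendsto_iff_forall_integral_tendsto.1 h_lim

section FiniteSumDirac

variable {ι Ω : Type*} [Fintype ι] [MeasurableSpace Ω] (a : ι → ℝ) (b : ι → Ω)

lemma isProbabilityMeasure_sum_ofReal_smul_dirac (ha : ∀ i, 0 ≤ a i) (hsum : ∑ i, a i = 1) :
    IsProbabilityMeasure (∑ i, ENNReal.ofReal (a i) • Measure.dirac (b i)) := by
  constructor
  simp [← ENNReal.ofReal_sum_of_nonneg fun i _ => ha i, hsum]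

lemma ae_sum_ofReal_smul_dirac [MeasurableSingletonClass Ω] {p : Ω → Prop} (hp : ∀ i, p (b i)) :
    ∀ᵐ x ∂(∑ i, ENNReal.ofReal (a i) • Measure.dirac (b i)), p x := by
  rw [← Measure.sum_fintype, Measure.ae_sum_eq, Filter.eventually_iSup]
  exact fun i => Measure.ae_smul_measure (by simpa [ae_dirac_eq] using hp i) _

end FiniteSumDirac

theorem moment_convergence_to_compound_poisson_general {lam : ℝ} (hlam : 0 ≤ lam) {ν : Measure ℝ}
    [IsProbabilityMeasure ν] {s : Finset ℝ} (hs : 0 ∈ s) (hν : ∀ᵐ x ∂ν, x ∈ s) {m : ℕ → ℕ}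
    (hm : Tendsto m atTop atTop) {μs : ℕ → Measure ℝ}
    (h_div : ∀ n, ∃ ρ : Measure ℝ, IsProbabilityMeasure ρ ∧ μs n = convPow ρ (m n))
    (h_int : ∀ n, Integrable (fun x => x ^ (2 * s.card)) (μs n))
    (h_moment : ∀ i : ℕ, 1 ≤ i → i ≤ 2 * s.card →
      Tendsto (fun n => ∫ x, x ^ i ∂(μs n)) atTop
        (𝓝 (∫ x, x ^ i ∂(compoundPoisson lam ν)))) :
    WeakConv μs (compoundPoisson lam ν) := by
  have h_root (n : ℕ) : ∃ ρ : Measure ℝ, IsProbabilityMeasure ρ ∧ μs n = convPow ρ (m n) ∧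
      MemLp id (2 * s.card : ℕ) ρ := by
    obtain ⟨ρ, hρ, hμ⟩ := h_div n
    exact hμ ▸ exists_convPow_eq_memLp_id
      (memLp_id_natCast_iff_integrable_pow.2 (hμ ▸ h_int n))
  choose ρs hρs_prob hμs hρs using h_root
  obtain rfl : μs = fun n => convPow (ρs n) (m n) := funext hμs
  exact weakConv_of_tendsto_charFun (fun n => inferInstance)
    (isProbabilityMeasure_compoundPoisson hlam)
    (tendsto_charFun_convPow hlam hs hν hm hρs h_moment)

theorem moment_convergence_to_compound_poisson
    (lam : ℝ) (hlam : 0 < lam)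
    (k : ℕ) (hk : 1 ≤ k)
    (b : Fin k → ℝ) (hb : Function.Injective b) (hb0 : ∀ i, b i ≠ 0)
    (a : Fin k → ℝ) (ha : ∀ i, 0 < a i) (hsum : ∑ i, a i = 1)
    (ν : Measure ℝ)
    (hν : ν = ∑ i, ENNReal.ofReal (a i) • Measure.dirac (b i))
    (μs : ℕ → Measure ℝ)
    (hprobs : ∀ n, IsProbabilityMeasure (μs n))
    (hID : ∀ n, IsClassicallyInfDiv (μs n))
    (hfin : ∀ n, ∀ i : ℕ, i ≤ 2 * k + 2 → Integrable (fun x => x ^ i) (μs n))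
    (hmom : ∀ i : ℕ, 1 ≤ i → i ≤ 2 * k + 2 →
      Tendsto (fun n => ∫ x, x ^ i ∂(μs n)) atTop
        (𝓝 (∫ x, x ^ i ∂(compoundPoisson lam ν)))) :
    WeakConv μs (compoundPoisson lam ν) := by
  have : IsProbabilityMeasure ν := by
    rw [hν]
    exact isProbabilityMeasure_sum_ofReal_smul_dirac a b (fun i => (ha i).le) hsum
  have h_zero_notMem : (0 : ℝ) ∉ Finset.univ.image b := by simpa using hb0
  have h_card : 2 * (insert 0 (Finset.univ.image b)).card = 2 * k + 2 := by
    rw [Finset.card_insert_of_notMem h_zero_notMem, Finset.card_image_of_injective _ hb,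
      Finset.card_fin, mul_add_one]
  refine moment_convergence_to_compound_poisson_general hlam.le (Finset.mem_insert_self 0 _) ?_
    (tendsto_add_atTop_nat 1) (fun n => hID n (n + 1) n.succ_pos) (fun n => hfin n _ h_card.le)
    (fun i hi hi_le => hmom i hi (hi_le.trans h_card.le))
  rw [hν]
  exact ae_sum_ofReal_smul_dirac a b (by simp)
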